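/- arXiv:2103.15010 — 4 statements merged into one kernel-verified Lean document; each statement's English description precedes it below -/
import Mathlib

section
/- Let T > 0, n, m ∈ ℕ, L_F > 0, and let x̃ : [0,T] → ℝⁿ be differentiable and ũ : [0,T] → ℝᵐ continuous, with ‖x̃'(t)‖ ≤ L_F(‖x̃(t)‖ + ‖ũ(t)‖) for all t ∈ [0,T]. Let Q : ℝⁿ → ℝ, R : ℝᵐ → ℝ, V : ℝⁿ → ℝ be continuous with α_Q‖x‖² ≤ Q(x), α_R‖u‖² ≤ R(u), α_V‖x‖² ≤ V(x) for all x, u, where α_Q, α_R, α_V > 0. Define Ṽ(s) = ∫ₛᵀ (Q(x̃(t)) + R(ũ(t))) dt + V(x̃(T)). Then for all 0 ≤ s' ≤ s ≤ T, ‖x̃(s)‖² ≤ (1/α_Q)·(6L_F + 2L_F α_Q/α_R + 2α_Q/α_V)·Ṽ(s'). -/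
open Set

/-- Lemma 1 (case with terminal cost, `α_V > 0`): along a trajectory whose velocity is
bounded by `L_F(‖x̃‖ + ‖ũ‖)`, the squared state norm at any time `s ≥ s'` is bounded by
`(1/α_Q)(6L_F + 2L_F α_Q/α_R + 2α_Q/α_V)` times the cost-to-go `Ṽ(s')`. -/
theorem stmt2
    (n m : ℕ) (T LF : ℝ) (hT : 0 < T) (hLF : 0 < LF)
    (αQ αR αV : ℝ) (hαQ : 0 < αQ) (hαR : 0 < αR) (hαV : 0 < αV)
    (xt : ℝ → EuclideanSpace ℝ (Fin n)) (ut : ℝ → EuclideanSpace ℝ (Fin m))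
    (hxdiff : ∀ t ∈ Icc (0:ℝ) T, DifferentiableAt ℝ xt t)
    (hut : ContinuousOn ut (Icc 0 T))
    (hder : ∀ t ∈ Icc (0:ℝ) T, ‖deriv xt t‖ ≤ LF * (‖xt t‖ + ‖ut t‖))
    (Q : EuclideanSpace ℝ (Fin n) → ℝ) (R : EuclideanSpace ℝ (Fin m) → ℝ)
    (V : EuclideanSpace ℝ (Fin n) → ℝ)
    (hQc : Continuous Q) (hRc : Continuous R) (hVc : Continuous V)
    (hQ : ∀ x, αQ * ‖x‖ ^ 2 ≤ Q x)
    (hR : ∀ u, αR * ‖u‖ ^ 2 ≤ R u)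
    (hV : ∀ x, αV * ‖x‖ ^ 2 ≤ V x)
    (Vt : ℝ → ℝ)
    (hVt : ∀ s, Vt s = (∫ t in s..T, (Q (xt t) + R (ut t))) + V (xt T)) :
    ∀ s' s : ℝ, 0 ≤ s' → s' ≤ s → s ≤ T →
      ‖xt s‖ ^ 2 ≤ (1 / αQ) * (6 * LF + 2 * LF * αQ / αR + 2 * αQ / αV) * Vt s' := by
  intro s' s hs' hss hsT
  have hs : 0 ≤ s := hs'.trans hss
  set C : ℝ := (1 / αQ) * (6 * LF + 2 * LF * αQ / αR + 2 * αQ / αV) with hC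
  have hC_eq : C = 6 * LF / αQ + 2 * LF / αR + 2 / αV := by rw [hC]; field_simp
  have hC_nonneg : 0 ≤ C := by positivity
  have hCQ : 3 * LF ≤ C * αQ := by
    have : C * αQ = 6 * LF + 2 * LF / αR * αQ + 2 / αV * αQ := by rw [hC_eq]; field_simp
    have h1 : 0 ≤ 2 * LF / αR * αQ := by positivity
    have h2 : 0 ≤ 2 / αV * αQ := by positivity
    linarith
  have hCR : LF ≤ C * αR := by
    have : C * αR = 6 * LF / αQ * αR + 2 * LF + 2 / αV * αR := by rw [hC_eq]; field_simp
    have h1 : 0 ≤ 6 * LF / αQ * αR := by positivity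
    have h2 : 0 ≤ 2 / αV * αR := by positivity
    linarith
  have hCV : 1 ≤ C * αV := by
    have : C * αV = 6 * LF / αQ * αV + 2 * LF / αR * αV + 2 := by rw [hC_eq]; field_simp
    have h1 : 0 ≤ 6 * LF / αQ * αV := by positivity
    have h2 : 0 ≤ 2 * LF / αR * αV := by positivity
    linarith
  have hxt : ContinuousOn xt (Icc 0 T) :=
    fun t ht => (hxdiff t ht).continuousAt.continuousWithinAt
  have hcost : ContinuousOn (fun t => Q (xt t) + R (ut t)) (Icc 0 T) :=
    (hQc.comp_continuousOn hxt).add (hRc.comp_continuousOn hut)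
  have hcost_nonneg : ∀ t, 0 ≤ Q (xt t) + R (ut t) := fun t =>
    add_nonneg ((by positivity : 0 ≤ αQ * ‖xt t‖ ^ 2).trans (hQ _))
      ((by positivity : 0 ≤ αR * ‖ut t‖ ^ 2).trans (hR _))
  have hsub : Icc s T ⊆ Icc 0 T := Icc_subset_Icc_left hs
  have hint : -‖xt T‖ ^ 2 - -‖xt s‖ ^ 2 ≤ ∫ t in s..T, C * (Q (xt t) + R (ut t)) := by
    refine intervalIntegral.sub_le_integral_of_hasDeriv_right_of_le hsT
      (g := fun t => -‖xt t‖ ^ 2) (g' := fun t => -(2 * inner ℝ (xt t) (deriv xt t)))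
      ((hxt.mono hsub).norm.pow 2).neg ?_
      ((hcost.mono hsub).const_mul C).integrableOn_Icc ?_
    · intro t ht
      exact (hxdiff t (hsub (Ioo_subset_Icc_self ht))).hasDerivAt.norm_sq.neg.hasDerivWithinAt
    · intro t ht
      have hspeed := mul_le_mul_of_nonneg_left
        (hder t (hsub (Ioo_subset_Icc_self ht))) (norm_nonneg (xt t))
      have hinner := (abs_le.1 (abs_real_inner_le_norm (xt t) (deriv xt t))).1
      have hyoung := mul_nonneg hLF.le (sq_nonneg (‖xt t‖ - ‖ut t‖))
      have h1 := mul_le_mul_of_nonneg_left (hQ (xt t)) hC_nonneg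
      have h2 := mul_le_mul_of_nonneg_left (hR (ut t)) hC_nonneg
      have h3 := mul_le_mul_of_nonneg_right hCQ (sq_nonneg ‖xt t‖)
      have h4 := mul_le_mul_of_nonneg_right hCR (sq_nonneg ‖ut t‖)
      linarith
  rw [intervalIntegral.integral_const_mul] at hint
  have hterminal : ‖xt T‖ ^ 2 ≤ C * V (xt T) := by
    have h1 := mul_le_mul_of_nonneg_left (hV (xt T)) hC_nonneg
    have h2 := mul_le_mul_of_nonneg_right hCV (sq_nonneg ‖xt T‖)
    linarith
  have hmono : ∫ t in s..T, (Q (xt t) + R (ut t)) ≤ ∫ t in s'..T, (Q (xt t) + R (ut t)) :=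
    intervalIntegral.integral_mono_interval hss hsT le_rfl
      (Filter.Eventually.of_forall hcost_nonneg)
      ((hcost.mono (Icc_subset_Icc_left hs')).intervalIntegrable_of_Icc (hss.trans hsT))
  have hscaled := mul_le_mul_of_nonneg_left hmono hC_nonneg
  rw [hVt s', mul_add]
  linarith
end

section
/- Let T > 0, n, m ∈ ℕ, L_F > 0, and let x̃ : [0,T] → ℝⁿ be differentiable and ũ : [0,T] → ℝᵐ continuous, with ‖x̃'(t)‖ ≤ L_F(‖x̃(t)‖ + ‖ũ(t)‖) for all t ∈ [0,T]. Let Q : ℝⁿ → ℝ, R : ℝᵐ → ℝ, V : ℝⁿ → ℝ be continuous with α_Q‖x‖² ≤ Q(x), α_R‖u‖² ≤ R(u), 0 ≤ V(x) for all x, u, where α_Q, α_R > 0. Define Ṽ(s) = ∫ₛᵀ (Q(x̃(t)) + R(ũ(t))) dt + V(x̃(T)). Then for every δ ∈ (0,T], every s' with 0 ≤ s' ≤ T − δ, and every s with s' ≤ s ≤ T, ‖x̃(s)‖² ≤ (1/α_Q)·(6L_F + 2L_F α_Q/α_R + 2/δ)·Ṽ(s'). -/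
open Set MeasureTheory

/-- A function whose derivative is dominated in absolute value by a continuous `φ`
on `[a, b]` oscillates by at most `∫ φ` on that interval. -/
lemma sub_le_integral_of_abs_deriv_le {f f' φ : ℝ → ℝ} {a b : ℝ} (hab : a ≤ b)
    (hf : ∀ t ∈ Icc a b, HasDerivAt f (f' t) t) (hφ : ContinuousOn φ (Icc a b))
    (hle : ∀ t ∈ Icc a b, |f' t| ≤ φ t) {c d : ℝ} (hc : c ∈ Icc a b) (hd : d ∈ Icc a b) :
    f d - f c ≤ ∫ t in a..b, φ t := by
  have mono : ∀ p q, a ≤ p → p ≤ q → q ≤ b → ∫ t in p..q, φ t ≤ ∫ t in a..b, φ t := by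
    intro p q hp hpq hq
    refine intervalIntegral.integral_mono_interval hp hpq hq ?_
      (hφ.intervalIntegrable_of_Icc hab)
    filter_upwards [ae_restrict_mem measurableSet_Ioc] with t ht
    exact (abs_nonneg _).trans (hle t (Ioc_subset_Icc_self ht))
  rcases le_total c d with hcd | hdc
  · have hsub : Icc c d ⊆ Icc a b := Icc_subset_Icc hc.1 hd.2
    refine le_trans ?_ (mono c d hc.1 hcd hd.2)
    exact intervalIntegral.sub_le_integral_of_hasDeriv_right_of_le hcd
      (fun t ht => (hf t (hsub ht)).continuousAt.continuousWithinAt)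
      (fun t ht => (hf t (hsub (Ioo_subset_Icc_self ht))).hasDerivWithinAt)
      (hφ.mono hsub).integrableOn_Icc
      (fun t ht => (le_abs_self _).trans (hle t (hsub (Ioo_subset_Icc_self ht))))
  · have hsub : Icc d c ⊆ Icc a b := Icc_subset_Icc hd.1 hc.2
    refine le_trans ?_ (mono d c hd.1 hdc hc.2)
    have key := intervalIntegral.sub_le_integral_of_hasDeriv_right_of_le (g := fun t => -f t)
      (g' := fun t => -f' t) hdc
      (fun t ht => (hf t (hsub ht)).neg.continuousAt.continuousWithinAt)
      (fun t ht => (hf t (hsub (Ioo_subset_Icc_self ht))).neg.hasDerivWithinAt)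
      (hφ.mono hsub).integrableOn_Icc
      (fun t ht => (neg_le_abs _).trans (hle t (hsub (Ioo_subset_Icc_self ht))))
    linarith

/-- A continuous function attains a value at most its mean over `[a, b]`. -/
lemma exists_mul_le_integral {φ : ℝ → ℝ} {a b : ℝ} (hab : a ≤ b)
    (hφ : ContinuousOn φ (Icc a b)) :
    ∃ c ∈ Icc a b, (b - a) * φ c ≤ ∫ t in a..b, φ t := by
  obtain ⟨c, hc, hmin⟩ := isCompact_Icc.exists_isMinOn (nonempty_Icc.2 hab) hφ
  refine ⟨c, hc, ?_⟩
  have := intervalIntegral.integral_mono_on hab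
    (intervalIntegrable_const (μ := volume) (c := φ c))
    (hφ.intervalIntegrable_of_Icc hab) (fun t ht => hmin ht)
  simpa using this

/-- Lemma 1 (case without positive-definite terminal cost, `V ≥ 0`): along a trajectory
whose velocity is bounded by `L_F(‖x̃‖ + ‖ũ‖)`, for every `δ ∈ (0,T]`, every
`s' ≤ T − δ` and every `s ∈ [s', T]`, the squared state norm at `s` is bounded by
`(1/α_Q)(6L_F + 2L_F α_Q/α_R + 2/δ)` times the cost-to-go `Ṽ(s')`. -/
theorem stmt3
    (n m : ℕ) (T LF : ℝ) (hT : 0 < T) (hLF : 0 < LF)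
    (αQ αR : ℝ) (hαQ : 0 < αQ) (hαR : 0 < αR)
    (xt : ℝ → EuclideanSpace ℝ (Fin n)) (ut : ℝ → EuclideanSpace ℝ (Fin m))
    (hxdiff : ∀ t ∈ Icc (0:ℝ) T, DifferentiableAt ℝ xt t)
    (hut : ContinuousOn ut (Icc 0 T))
    (hder : ∀ t ∈ Icc (0:ℝ) T, ‖deriv xt t‖ ≤ LF * (‖xt t‖ + ‖ut t‖))
    (Q : EuclideanSpace ℝ (Fin n) → ℝ) (R : EuclideanSpace ℝ (Fin m) → ℝ)
    (V : EuclideanSpace ℝ (Fin n) → ℝ)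
    (hQc : Continuous Q) (hRc : Continuous R) (hVc : Continuous V)
    (hQ : ∀ x, αQ * ‖x‖ ^ 2 ≤ Q x)
    (hR : ∀ u, αR * ‖u‖ ^ 2 ≤ R u)
    (hV : ∀ x, 0 ≤ V x)
    (Vt : ℝ → ℝ)
    (hVt : ∀ s, Vt s = (∫ t in s..T, (Q (xt t) + R (ut t))) + V (xt T)) :
    ∀ δ s' s : ℝ, 0 < δ → δ ≤ T → 0 ≤ s' → s' ≤ T - δ → s' ≤ s → s ≤ T →
      ‖xt s‖ ^ 2 ≤ (1 / αQ) * (6 * LF + 2 * LF * αQ / αR + 2 / δ) * Vt s' := by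
  intro δ s' s hδ _ hs' hs'T hs's hsT
  have hab : s' ≤ T := hs's.trans hsT
  have hsub : Icc s' T ⊆ Icc 0 T := Icc_subset_Icc_left hs'
  have hxc : ContinuousOn xt (Icc s' T) :=
    fun t ht => (hxdiff t (hsub ht)).continuousAt.continuousWithinAt
  set q : ℝ → ℝ := fun t => Q (xt t) + R (ut t) with hq
  have hqc : ContinuousOn q (Icc s' T) :=
    (hQc.comp_continuousOn hxc).add (hRc.comp_continuousOn (hut.mono hsub))
  have hxq : ∀ t, αQ * ‖xt t‖ ^ 2 ≤ q t := fun t => by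
    have := hQ (xt t)
    have := (by positivity : 0 ≤ αR * ‖ut t‖ ^ 2).trans (hR (ut t))
    simp only [hq]; linarith
  have huq : ∀ t, αR * ‖ut t‖ ^ 2 ≤ q t := fun t => by
    have := hR (ut t)
    have := (by positivity : 0 ≤ αQ * ‖xt t‖ ^ 2).trans (hQ (xt t))
    simp only [hq]; linarith
  have hqV : ∫ t in s'..T, q t ≤ Vt s' := by
    rw [hVt]; linarith [hV (xt T)]
  have hq0 : 0 ≤ ∫ t in s'..T, q t :=
    intervalIntegral.integral_nonneg hab fun t _ =>
      (by positivity : 0 ≤ αQ * ‖xt t‖ ^ 2).trans (hxq t)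
  set K : ℝ := LF * (3 / αQ + 1 / αR) with hK
  have hK0 : 0 ≤ K := by positivity
  have hderiv : ∀ t ∈ Icc s' T,
      HasDerivAt (fun t => ‖xt t‖ ^ 2) (2 * inner ℝ (xt t) (deriv xt t)) t :=
    fun t ht => (hxdiff t (hsub ht)).hasDerivAt.norm_sq
  have hbound : ∀ t ∈ Icc s' T, |2 * inner ℝ (xt t) (deriv xt t)| ≤ K * q t := by
    intro t ht
    have hx : ‖xt t‖ ^ 2 ≤ q t / αQ := by
      rw [le_div_iff₀ hαQ]; linarith [hxq t]
    have hu : ‖ut t‖ ^ 2 ≤ q t / αR := by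
      rw [le_div_iff₀ hαR]; linarith [huq t]
    calc |2 * inner ℝ (xt t) (deriv xt t)|
        = 2 * |inner ℝ (xt t) (deriv xt t)| := by rw [abs_mul, abs_two]
      _ ≤ 2 * (‖xt t‖ * ‖deriv xt t‖) := by gcongr; exact abs_real_inner_le_norm _ _
      _ ≤ 2 * (‖xt t‖ * (LF * (‖xt t‖ + ‖ut t‖))) := by gcongr; exact hder t (hsub ht)
      _ = LF * (2 * ‖xt t‖ ^ 2 + 2 * ‖xt t‖ * ‖ut t‖) := by ring
      _ ≤ LF * (3 * ‖xt t‖ ^ 2 + ‖ut t‖ ^ 2) := by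
        gcongr ?_ * ?_
        linarith [two_mul_le_add_sq ‖xt t‖ ‖ut t‖]
      _ ≤ LF * (3 * (q t / αQ) + q t / αR) := by gcongr
      _ = K * q t := by rw [hK]; ring
  obtain ⟨c, hc, hcmin⟩ := exists_mul_le_integral hab hqc
  have hosc := sub_le_integral_of_abs_deriv_le hab hderiv (hqc.const_mul K) hbound hc ⟨hs's, hsT⟩
  rw [intervalIntegral.integral_const_mul] at hosc
  have hKV := mul_le_mul_of_nonneg_left hqV hK0
  have hV0 : 0 ≤ Vt s' := hq0.trans hqV
  have hcV : ‖xt c‖ ^ 2 ≤ Vt s' / (αQ * δ) := by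
    rw [le_div_iff₀ (by positivity)]
    calc ‖xt c‖ ^ 2 * (αQ * δ) = δ * (αQ * ‖xt c‖ ^ 2) := by ring
      _ ≤ (T - s') * (αQ * ‖xt c‖ ^ 2) := by gcongr; linarith
      _ ≤ (T - s') * q c := mul_le_mul_of_nonneg_left (hxq c) (by linarith)
      _ ≤ Vt s' := hcmin.trans hqV
  have hhalf : ‖xt s‖ ^ 2 ≤ K * Vt s' + Vt s' / (αQ * δ) := by linarith
  have hnonneg : 0 ≤ K * Vt s' + Vt s' / (αQ * δ) := by positivity
  calc ‖xt s‖ ^ 2 ≤ 2 * (K * Vt s' + Vt s' / (αQ * δ)) := by linarith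
    _ = (1 / αQ) * (6 * LF + 2 * LF * αQ / αR + 2 / δ) * Vt s' := by
      rw [hK]; field_simp; ring
end

section
/- Let F : ℝ × ℝ → ℝ be differentiable at (x₀, u₀) with F(x₀, u₀) = 0, x₀ ≠ 0, and B̌ := ∂F/∂u(x₀, u₀) ≠ 0. Let Ǎ := ∂F/∂x(x₀, u₀), q, q_f, r > 0, T > 0. Suppose there exists a differentiable p : [0,T] → ℝ with −p'(t) = Ǎ p(t) + 2q x₀ for all t, p(T) = 2q_f x₀, and B̌ p(t) + 2r u₀ = 0 for all t ∈ [0,T]. Then Ǎ < 0 and x₀·d₀ > 0, where d₀ := −Ǎ x₀ − B̌ u₀. -/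
open Set

/-- For a one-dimensional system `ẋ = F(x,u)` with running cost `q x² + r u²` and
terminal cost `q_f x(T)²`: if a constant pair `(x₀, u₀)` with `F(x₀,u₀) = 0`, `x₀ ≠ 0`
admits a costate `p` solving `−ṗ = Ǎ p + 2q x₀`, `p(T) = 2q_f x₀` with
`B̌ p(t) + 2r u₀ ≡ 0` (first-order stationarity), then necessarily `Ǎ < 0` and the
drift `d₀ = −Ǎx₀ − B̌u₀` satisfies `x₀ d₀ > 0`. -/
theorem stmt8
    (F : ℝ × ℝ → ℝ) (x0 u0 Ac Bc : ℝ)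
    (hFdiff : DifferentiableAt ℝ F (x0, u0))
    (hFA : HasDerivAt (fun x => F (x, u0)) Ac x0)
    (hFB : HasDerivAt (fun u => F (x0, u)) Bc u0)
    (hF0 : F (x0, u0) = 0) (hx0 : x0 ≠ 0) (hBc : Bc ≠ 0)
    (q qf r T : ℝ) (hq : 0 < q) (hqf : 0 < qf) (hr : 0 < r) (hT : 0 < T)
    (p : ℝ → ℝ)
    (hp : ∀ t ∈ Icc (0:ℝ) T, HasDerivAt p (-(Ac * p t + 2 * q * x0)) t)
    (hpT : p T = 2 * qf * x0)
    (hstat : ∀ t ∈ Icc (0:ℝ) T, Bc * p t + 2 * r * u0 = 0) :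
    Ac < 0 ∧ x0 * (-(Ac * x0) - Bc * u0) > 0 := by
  have hTmem : T ∈ Icc (0:ℝ) T := ⟨hT.le, le_rfl⟩
  have hmid : T / 2 ∈ Icc (0:ℝ) T := ⟨by linarith, by linarith⟩
  have hconst : ∀ t ∈ Icc (0:ℝ) T, p t = 2 * qf * x0 := by
    intro t ht
    rw [← hpT]
    exact mul_left_cancel₀ hBc (by linarith [hstat t ht, hstat T hTmem])
  have hloc : p =ᶠ[nhds (T / 2)] fun _ => 2 * qf * x0 := by
    filter_upwards [Icc_mem_nhds (by linarith : (0:ℝ) < T / 2) (by linarith : T / 2 < T)]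
      with t ht using hconst t ht
  have hderiv : -(Ac * p (T / 2) + 2 * q * x0) = 0 :=
    (hp _ hmid).unique ((hasDerivAt_const _ _).congr_of_eventuallyEq hloc)
  rw [hconst _ hmid] at hderiv
  have hAq : Ac * qf = -q := mul_right_cancel₀ hx0 (by linarith)
  have hA : Ac < 0 := by
    by_contra! h
    linarith [mul_nonneg h hqf.le]
  have hu : r * u0 = -(Bc * qf * x0) := by
    have h := hstat T hTmem
    rw [hpT] at h
    linarith
  have hx2 : 0 < x0 ^ 2 := by positivity
  have hBu : 0 < -(Bc * u0 * x0) := by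
    refine pos_of_mul_pos_right (a := r) ?_ hr.le
    have h : r * -(Bc * u0 * x0) = Bc ^ 2 * qf * x0 ^ 2 := by
      linear_combination (-(Bc * x0)) * hu
    rw [h]
    positivity
  exact ⟨hA, by linarith [mul_pos (neg_pos.mpr hA) hx2]⟩
end

section
/- Let η : ℝ → ℝ be differentiable at 5 with η(5) = 1 and η'(5) = 0. Let T > 0, r > 0, and q = q_f > 0. Let A be the 2×2 matrix with rows (−1, 1) and (0, 0), B = (0, 1)ᵀ ∈ ℝ², and d = (10, 0)ᵀ ∈ ℝ². Define the constant functions x̃(t) = (5, −5), ũ(t) = 0, and p(t) = (10 q_f, 0) on [0,T]. Then: (i) A x̃(t) + B ũ(t) + η(5)·d = 0 for all t, so x̃ is the trajectory of ẋ = Ax + Bu + η(x₁)d from x₀ = (5,−5) under ũ ≡ 0; (ii) the Jacobian of x ↦ Ax + η(x₁)d at x̃(t) equals A (since η'(5) = 0), and −p'(t) = Aᵀ p(t) + 2q x̃(t) for all t with p(T) = (2 q_f · 5, 0) = (10 q_f, 0); (iii) Bᵀ p(t) + 2r ũ(t) = 0 for all t ∈ [0,T]. Hence ũ ≡ 0 satisfies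 the first-order stationarity conditions for every horizon T > 0 and every r > 0. -/
open Set Matrix

/-- Bump-function counterexample: for the system `ẋ = Ax + Bu + η(x₁)d` with
`A = [[−1,1],[0,0]]`, `B = (0,1)ᵀ`, `d = (10,0)ᵀ` and `η(5) = 1`, `η'(5) = 0`,
the constant input `ũ ≡ 0` from `x₀ = (5,−5)` gives the constant trajectory
`x̃ ≡ (5,−5)`, the Jacobian of the drift dynamics at `x̃` is `A`, and the constant
costate `p ≡ (10q_f, 0)` (with `q = q_f`) satisfies the costate equation and
`Bᵀp(t) + 2r ũ(t) ≡ 0`, for every horizon `T > 0` and every `r > 0`. -/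
theorem stmt9
    (η : ℝ → ℝ) (hη5 : η 5 = 1) (hη'5 : HasDerivAt η 0 5)
    (T r q qf : ℝ) (hT : 0 < T) (hr : 0 < r) (hqf : 0 < qf) (hq : q = qf)
    (A : Matrix (Fin 2) (Fin 2) ℝ) (hA : A = !![-1, 1; 0, 0])
    (B d : Fin 2 → ℝ) (hB : B = ![0, 1]) (hd : d = ![10, 0])
    (xt : ℝ → (Fin 2 → ℝ)) (ut : ℝ → ℝ) (p : ℝ → (Fin 2 → ℝ))
    (hxt : ∀ t, xt t = ![5, -5]) (hut : ∀ t, ut t = 0)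
    (hp : ∀ t, p t = ![10 * qf, 0]) :
    -- (i) equilibrium identity and trajectory property
    (∀ t ∈ Icc (0:ℝ) T, A.mulVec (xt t) + ut t • B + η 5 • d = 0) ∧
    xt 0 = ![5, -5] ∧
    (∀ t ∈ Icc (0:ℝ) T,
      HasDerivAt xt (A.mulVec (xt t) + ut t • B + η ((xt t) 0) • d) t) ∧
    -- (ii) Jacobian of the drift dynamics is A, and the costate equation holds
    (∀ t ∈ Icc (0:ℝ) T,
      HasFDerivAt (fun x : Fin 2 → ℝ => A.mulVec x + η (x 0) • d)
        (LinearMap.toContinuousLinearMap A.mulVecLin) (xt t)) ∧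
    (∀ t ∈ Icc (0:ℝ) T,
      HasDerivAt p (-(Aᵀ.mulVec (p t) + (2 * q) • xt t)) t) ∧
    p T = ![2 * qf * 5, 0] ∧ p T = ![10 * qf, 0] ∧
    -- (iii) stationarity
    (∀ t ∈ Icc (0:ℝ) T, B ⬝ᵥ p t + 2 * r * ut t = 0) := by
  have equilibrium (t : ℝ) : A.mulVec (xt t) + ut t • B + η 5 • d = 0 := by
    rw [hxt, hut, hη5, hA, hB, hd]
    ext i
    fin_cases i <;> norm_num [Matrix.mulVec, dotProduct]
  have costate (t : ℝ) : Aᵀ.mulVec (p t) + (2 * q) • xt t = 0 := by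
    rw [hxt, hp, hA, hq]
    ext i
    fin_cases i <;> simp <;> ring
  have hxt0 (t : ℝ) : xt t 0 = 5 := by simp [hxt]
  refine ⟨fun t _ => equilibrium t, hxt 0, fun t _ => ?_, fun t _ => ?_, fun t _ => ?_, ?_, hp T,
    fun t _ => by simp [hB, hp, hut]⟩
  · rw [hxt0, equilibrium, funext hxt]
    exact hasDerivAt_const t _
  · have hη : HasDerivAt η 0 (xt t 0) := by rwa [hxt0]
    have hbump : HasFDerivAt (𝕜 := ℝ) (fun x : Fin 2 → ℝ => η (x 0) • d) 0 (xt t) := by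
      have happly : HasFDerivAt (fun x : Fin 2 → ℝ => x 0)
          (ContinuousLinearMap.proj (R := ℝ) (φ := fun _ : Fin 2 => ℝ) 0) (xt t) :=
        hasFDerivAt_apply 0 (xt t)
      refine ((hη.comp_hasFDerivAt (xt t) happly).smul_const d).congr_fderiv ?_
      ext
      simp
    exact ((LinearMap.toContinuousLinearMap A.mulVecLin).hasFDerivAt.add hbump).congr_fderiv
      (add_zero _)
  · rw [costate, neg_zero, funext hp]
    exact hasDerivAt_const t _
  · rw [hp, show 10 * qf = 2 * qf * 5 by ring]
end
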